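/- Let (A,⋄,{·,·,·}) be a ternary pre-F-manifold algebra with sub-adjacent ternary F-manifold algebra A^c = (A,·,[·,·,·]), where x·y = x⋄y + y⋄x and [x,y,z] = {x,y,z} + {y,z,x} + {z,x,y}. Define 𝕃 : A×A → End(A) by 𝕃(x,y)z = {x,y,z} and L_⋄ : A → End(A) by L_⋄(x)y = x⋄y. Then (A; 𝕃, L_⋄) is a representation of the ternary F-manifold algebra A^c. -/

import Mathlib

open TensorProduct

/-- The 3-Leibnizator `L(x1,x2,x3,x4) = [x1,x2,x3·x4] − x3·[x1,x2,x4] − [x1,x2,x3]·x4`. -/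
def leib3 {K : Type*} [Field K] {A : Type*} [AddCommGroup A] [Module K A]
    (m : A →ₗ[K] A →ₗ[K] A) (b : A →ₗ[K] A →ₗ[K] A →ₗ[K] A) (x1 x2 x3 x4 : A) : A :=
  b x1 x2 (m x3 x4) - m x3 (b x1 x2 x4) - m (b x1 x2 x3) x4

/-- A ternary F-manifold algebra. -/
structure TernaryFM (K : Type*) [Field K] (A : Type*) [AddCommGroup A] [Module K A] where
  mul : A →ₗ[K] A →ₗ[K] A
  br : A →ₗ[K] A →ₗ[K] A →ₗ[K] A
  mul_comm : ∀ x y, mul x y = mul y x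
  mul_assoc : ∀ x y z, mul (mul x y) z = mul x (mul y z)
  br_skew₁₂ : ∀ x y z, br x y z = - br y x z
  br_skew₂₃ : ∀ x y z, br x y z = - br x z y
  fund : ∀ x1 x2 x3 x4 x5,
    br x1 x2 (br x3 x4 x5) =
      br (br x1 x2 x3) x4 x5 + br x3 (br x1 x2 x4) x5 + br x3 x4 (br x1 x2 x5)
  leib : ∀ x1 x2 x3 x4 x5,
    leib3 mul br (mul x1 x2) x3 x4 x5 =
      mul x1 (leib3 mul br x2 x3 x4 x5) + mul x2 (leib3 mul br x1 x3 x4 x5)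

/-- A commutative associative algebra structure (as a bilinear map). -/
structure CommAssocAlg (K : Type*) [Field K] (B : Type*) [AddCommGroup B] [Module K B] where
  mul : B →ₗ[K] B →ₗ[K] B
  mul_comm : ∀ x y, mul x y = mul y x
  mul_assoc : ∀ x y z, mul (mul x y) z = mul x (mul y z)

/-- A ternary Nambu–Poisson algebra. -/
structure TernaryNP (K : Type*) [Field K] (A : Type*) [AddCommGroup A] [Module K A] where
  mul : A →ₗ[K] A →ₗ[K] A
  br : A →ₗ[K] A →ₗ[K] A →ₗ[K] A
  mul_comm : ∀ x y, mul x y = mul y x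
  mul_assoc : ∀ x y z, mul (mul x y) z = mul x (mul y z)
  br_skew₁₂ : ∀ x y z, br x y z = - br y x z
  br_skew₂₃ : ∀ x y z, br x y z = - br x z y
  fund : ∀ x1 x2 x3 x4 x5,
    br x1 x2 (br x3 x4 x5) =
      br (br x1 x2 x3) x4 x5 + br x3 (br x1 x2 x4) x5 + br x3 x4 (br x1 x2 x5)
  leibniz : ∀ x1 x2 x3 x4,
    br x1 x2 (mul x3 x4) = mul x3 (br x1 x2 x4) + mul (br x1 x2 x3) x4

/-- The binary Leibnizator `L(x,y,z) = [x,y·z] − [x,y]·z − y·[x,z]`. -/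
def leib2 {K : Type*} [Field K] {A : Type*} [AddCommGroup A] [Module K A]
    (m : A →ₗ[K] A →ₗ[K] A) (b : A →ₗ[K] A →ₗ[K] A) (x y z : A) : A :=
  b x (m y z) - m (b x y) z - m y (b x z)

/-- An F-manifold algebra. -/
structure FManifoldAlg (K : Type*) [Field K] (A : Type*) [AddCommGroup A] [Module K A] where
  mul : A →ₗ[K] A →ₗ[K] A
  br : A →ₗ[K] A →ₗ[K] A
  mul_comm : ∀ x y, mul x y = mul y x
  mul_assoc : ∀ x y z, mul (mul x y) z = mul x (mul y z)
  br_skew : ∀ x y, br x y = - br y x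
  jacobi : ∀ x y z, br x (br y z) + br y (br z x) + br z (br x y) = 0
  hm : ∀ x y z w,
    leib2 mul br (mul x y) z w = mul x (leib2 mul br y z w) + mul y (leib2 mul br x z w)

section Rep

variable {K : Type*} [Field K] {A V : Type*} [AddCommGroup A] [Module K A]
  [AddCommGroup V] [Module K V]

/-- Representation of the underlying 3-Lie algebra. -/
def Is3LieRep (T : TernaryFM K A) (ρ : A →ₗ[K] A →ₗ[K] V →ₗ[K] V) : Prop :=
  (∀ x y, ρ x y = - ρ y x) ∧
  (∀ x1 x2 x3 x4,
    ρ x1 x2 ∘ₗ ρ x3 x4 - ρ x3 x4 ∘ₗ ρ x1 x2 = ρ (T.br x1 x2 x3) x4 - ρ (T.br x1 x2 x4) x3) ∧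
  (∀ x1 x2 x3 x4,
    ρ (T.br x1 x2 x3) x4 = ρ x1 x2 ∘ₗ ρ x3 x4 + ρ x2 x3 ∘ₗ ρ x1 x4 + ρ x3 x1 ∘ₗ ρ x2 x4)

/-- Representation of the underlying commutative associative algebra. -/
def IsAssocRep (T : TernaryFM K A) (μ : A →ₗ[K] V →ₗ[K] V) : Prop :=
  ∀ x y, μ (T.mul x y) = μ x ∘ₗ μ y

/-- `L1(x,y,z,u) = ρ(x,y)μ(z)u − μ(z)ρ(x,y)u − μ([x,y,z])u`. -/
def L1 (T : TernaryFM K A) (ρ : A →ₗ[K] A →ₗ[K] V →ₗ[K] V) (μ : A →ₗ[K] V →ₗ[K] V)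
    (x y z : A) (u : V) : V :=
  ρ x y (μ z u) - μ z (ρ x y u) - μ (T.br x y z) u

/-- `L2(x,y,z,u) = μ(z)ρ(x,y)u + μ(y)ρ(x,z)u − ρ(x,y·z)u`. -/
def L2 (T : TernaryFM K A) (ρ : A →ₗ[K] A →ₗ[K] V →ₗ[K] V) (μ : A →ₗ[K] V →ₗ[K] V)
    (x y z : A) (u : V) : V :=
  μ z (ρ x y u) + μ y (ρ x z u) - ρ x (T.mul y z) u

/-- `L3(x,y,z,u) = ρ(x,y)μ(z)u + ρ(x,z)μ(y)u − ρ(x,y·z)u`. -/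
def L3 (T : TernaryFM K A) (ρ : A →ₗ[K] A →ₗ[K] V →ₗ[K] V) (μ : A →ₗ[K] V →ₗ[K] V)
    (x y z : A) (u : V) : V :=
  ρ x y (μ z u) + ρ x z (μ y u) - ρ x (T.mul y z) u

/-- Representation of a ternary F-manifold algebra. -/
def IsFMRep (T : TernaryFM K A) (ρ : A →ₗ[K] A →ₗ[K] V →ₗ[K] V)
    (μ : A →ₗ[K] V →ₗ[K] V) : Prop :=
  Is3LieRep T ρ ∧ IsAssocRep T μ ∧
  (∀ x1 x2 x3 x4 u, L1 T ρ μ (T.mul x1 x2) x3 x4 u =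
      μ x1 (L1 T ρ μ x2 x3 x4 u) + μ x2 (L1 T ρ μ x1 x3 x4 u)) ∧
  (∀ x1 x2 x3 x4 u, L2 T ρ μ (T.mul x1 x2) x3 x4 u =
      μ x1 (L2 T ρ μ x2 x3 x4 u) + μ x2 (L2 T ρ μ x1 x3 x4 u)) ∧
  (∀ x1 x2 x3 x4 u, μ (leib3 T.mul T.br x1 x2 x3 x4) u =
      L2 T ρ μ x2 x3 x4 (μ x1 u) - μ x1 (L2 T ρ μ x2 x3 x4 u))

/-- Relative Rota–Baxter operator on a ternary F-manifold algebra. -/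
def IsRelRB (T : TernaryFM K A) (ρ : A →ₗ[K] A →ₗ[K] V →ₗ[K] V)
    (μ : A →ₗ[K] V →ₗ[K] V) (Tm : V →ₗ[K] A) : Prop :=
  (∀ u v, T.mul (Tm u) (Tm v) = Tm (μ (Tm u) v + μ (Tm v) u)) ∧
  (∀ u v w, T.br (Tm u) (Tm v) (Tm w) =
      Tm (ρ (Tm u) (Tm v) w + ρ (Tm v) (Tm w) u + ρ (Tm w) (Tm u) v))

end Rep

section Pre

variable {K : Type*} [Field K] {A : Type*} [AddCommGroup A] [Module K A]

/-- Cyclic sum bracket `[x,y,z]^C = {x,y,z} + {y,z,x} + {z,x,y}`. -/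
def cbr (t : A →ₗ[K] A →ₗ[K] A →ₗ[K] A) (x y z : A) : A :=
  t x y z + t y z x + t z x y

/-- Symmetrized product `x·y = x⋄y + y⋄x`. -/
def sym (d : A →ₗ[K] A →ₗ[K] A) (x y : A) : A := d x y + d y x

/-- `F1(x1,x2,x3,x4) = {x1,x2,x3⋄x4} − x3⋄{x1,x2,x4} − [x1,x2,x3]⋄x4`. -/
def F1 (d : A →ₗ[K] A →ₗ[K] A) (t : A →ₗ[K] A →ₗ[K] A →ₗ[K] A) (x1 x2 x3 x4 : A) : A :=
  t x1 x2 (d x3 x4) - d x3 (t x1 x2 x4) - d (cbr t x1 x2 x3) x4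

/-- `F2(x1,x2,x3,x4) = x3⋄{x1,x2,x4} + x2⋄{x1,x3,x4} − {x1,x2·x3,x4}`. -/
def F2 (d : A →ₗ[K] A →ₗ[K] A) (t : A →ₗ[K] A →ₗ[K] A →ₗ[K] A) (x1 x2 x3 x4 : A) : A :=
  d x3 (t x1 x2 x4) + d x2 (t x1 x3 x4) - t x1 (sym d x2 x3) x4

/-- The 3-Leibnizator of the sub-adjacent operations. -/
def Lpre (d : A →ₗ[K] A →ₗ[K] A) (t : A →ₗ[K] A →ₗ[K] A →ₗ[K] A) (x1 x2 x3 x4 : A) : A :=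
  cbr t x1 x2 (sym d x3 x4) - sym d x3 (cbr t x1 x2 x4) - sym d (cbr t x1 x2 x3) x4

/-- A 3-pre-Lie algebra. -/
structure ThreePreLie (K : Type*) [Field K] (A : Type*) [AddCommGroup A] [Module K A] where
  tri : A →ₗ[K] A →ₗ[K] A →ₗ[K] A
  tri_skew : ∀ x y z, tri x y z = - tri y x z
  preLie₁ : ∀ x1 x2 x3 x4 x5,
    tri x1 x2 (tri x3 x4 x5) =
      tri (cbr tri x1 x2 x3) x4 x5 + tri x3 (cbr tri x1 x2 x4) x5 + tri x3 x4 (tri x1 x2 x5)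
  preLie₂ : ∀ x1 x2 x3 x4 x5,
    tri (cbr tri x1 x2 x3) x4 x5 =
      tri x1 x2 (tri x3 x4 x5) + tri x2 x3 (tri x1 x4 x5) + tri x3 x1 (tri x2 x4 x5)

/-- A ternary pre-F-manifold algebra. -/
structure TernaryPreFM (K : Type*) [Field K] (A : Type*) [AddCommGroup A] [Module K A] where
  dia : A →ₗ[K] A →ₗ[K] A
  tri : A →ₗ[K] A →ₗ[K] A →ₗ[K] A
  zinbiel : ∀ x y z, dia x (dia y z) = dia (dia y x) z + dia (dia x y) z
  tri_skew : ∀ x y z, tri x y z = - tri y x z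
  preLie₁ : ∀ x1 x2 x3 x4 x5,
    tri x1 x2 (tri x3 x4 x5) =
      tri (cbr tri x1 x2 x3) x4 x5 + tri x3 (cbr tri x1 x2 x4) x5 + tri x3 x4 (tri x1 x2 x5)
  preLie₂ : ∀ x1 x2 x3 x4 x5,
    tri (cbr tri x1 x2 x3) x4 x5 =
      tri x1 x2 (tri x3 x4 x5) + tri x2 x3 (tri x1 x4 x5) + tri x3 x1 (tri x2 x4 x5)
  pf1 : ∀ x1 x2 x3 x4 x5,
    F1 dia tri (sym dia x1 x2) x3 x4 x5 =
      dia x1 (F1 dia tri x2 x3 x4 x5) + dia x2 (F1 dia tri x1 x3 x4 x5)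
  pf2 : ∀ x1 x2 x3 x4 x5,
    F2 dia tri (sym dia x1 x2) x3 x4 x5 =
      dia x1 (F2 dia tri x2 x3 x4 x5) + dia x2 (F2 dia tri x1 x3 x4 x5)
  pf3 : ∀ x1 x2 x3 x4 x5,
    dia (Lpre dia tri x1 x2 x3 x4) x5 =
      F2 dia tri x2 x3 x4 (dia x1 x5) - dia x1 (F2 dia tri x2 x3 x4 x5)

/-- A ternary pre-Nambu–Poisson algebra. -/
structure TernaryPreNP (K : Type*) [Field K] (A : Type*) [AddCommGroup A] [Module K A] where
  dia : A →ₗ[K] A →ₗ[K] A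
  tri : A →ₗ[K] A →ₗ[K] A →ₗ[K] A
  zinbiel : ∀ x y z, dia x (dia y z) = dia (dia y x) z + dia (dia x y) z
  tri_skew : ∀ x y z, tri x y z = - tri y x z
  preLie₁ : ∀ x1 x2 x3 x4 x5,
    tri x1 x2 (tri x3 x4 x5) =
      tri (cbr tri x1 x2 x3) x4 x5 + tri x3 (cbr tri x1 x2 x4) x5 + tri x3 x4 (tri x1 x2 x5)
  preLie₂ : ∀ x1 x2 x3 x4 x5,
    tri (cbr tri x1 x2 x3) x4 x5 =
      tri x1 x2 (tri x3 x4 x5) + tri x2 x3 (tri x1 x4 x5) + tri x3 x1 (tri x2 x4 x5)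
  np1 : ∀ x1 x2 x3 x4,
    tri x1 x2 (dia x3 x4) = dia x3 (tri x1 x2 x4) + dia (cbr tri x1 x2 x3) x4
  np2 : ∀ x1 x2 x3 x4,
    tri x1 (sym dia x2 x3) x4 = dia x3 (tri x1 x2 x4) + dia x2 (tri x1 x3 x4)

end Pre

/-- The coherence map `K(x,y,z,u) = [x,y,z·u] + [x,z,u·y] + [x,u,y·z]`. -/
def kmap {K : Type*} [Field K] {A : Type*} [AddCommGroup A] [Module K A]
    (T : TernaryFM K A) (x y z u : A) : A :=
  T.br x y (T.mul z u) + T.br x z (T.mul u y) + T.br x u (T.mul y z)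

section SD

variable {K : Type*} [Field K] {A V : Type*} [AddCommGroup A] [Module K A]
  [AddCommGroup V] [Module K V]

/-- Semidirect product multiplication on `A × V`. -/
def sdMul (T : TernaryFM K A) (μ : A →ₗ[K] V →ₗ[K] V) (p q : A × V) : A × V :=
  (T.mul p.1 q.1, μ p.1 q.2 + μ q.1 p.2)

/-- Semidirect product ternary bracket on `A × V`. -/
def sdBr (T : TernaryFM K A) (ρ : A →ₗ[K] A →ₗ[K] V →ₗ[K] V) (p q r : A × V) : A × V :=
  (T.br p.1 q.1 r.1, ρ p.1 q.1 r.2 - ρ p.1 r.1 q.2 + ρ q.1 r.1 p.2)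

/-- The Nijenhuis operator `N_T(x+u) = Tu` on `A × V`. -/
def nT (Tm : V →ₗ[K] A) (p : A × V) : A × V := (Tm p.2, 0)

end SD

/-!
Writing `[x,y,z]` and `x·y` for the sub-adjacent operations, the representation axioms are the
axioms of a ternary pre-F-manifold algebra read through `𝕃` and `L_⋄`; the work is in showing that
the sub-adjacent operations form a ternary F-manifold algebra. For the Leibnizator `L` this rests on
two facts.

* `F2(x₂,x₃,x₄,x₁⋄u) − x₁⋄F2(x₂,x₃,x₄,u)` equals `−L(x₁,x₂,x₃,x₄)⋄u` plus the defect of the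
  compatibility identity for `F1`. This defect vanishes, and the left side is `L(x₁,x₂,x₃,x₄)⋄u` by
  the compatibility identity for `L`, so `L(x₁,x₂,x₃,x₄)⋄u` is its own negative.
* `L(x₁,x₂,x₃,x₄) = F1(x₁,x₂,x₃,x₄) + F1(x₁,x₂,x₄,x₃) − F2(x₂,x₃,x₄,x₁) + F2(x₁,x₃,x₄,x₂)`, so
  the compatibility identities compute `L(x₁·x₂,x₃,x₄,x₅)` up to the signs of terms of the form
  `L(…)⋄u`, and by the first fact these signs are immaterial in every characteristic.
-/

section Operations

variable {K : Type*} [Field K] {A : Type*} [AddCommGroup A] [Module K A]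
  {d : A →ₗ[K] A →ₗ[K] A} {t : A →ₗ[K] A →ₗ[K] A →ₗ[K] A}

/-- The symmetrized product `sym d` as a bilinear map. -/
def symBilin (d : A →ₗ[K] A →ₗ[K] A) : A →ₗ[K] A →ₗ[K] A := d + d.flip

/-- The cyclic sum bracket `cbr t` as a trilinear map; the last two summands are
`(x, y, z) ↦ t y z x` and `(x, y, z) ↦ t z x y`. -/
def cbrTrilin (t : A →ₗ[K] A →ₗ[K] A →ₗ[K] A) : A →ₗ[K] A →ₗ[K] A →ₗ[K] A :=
  t + (LinearMap.lflip.toLinearMap ∘ₗ t).flip + LinearMap.lflip.toLinearMap ∘ₗ t.flip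

/-- The Zinbiel identity for a bilinear product. -/
def IsZinbiel (d : A →ₗ[K] A →ₗ[K] A) : Prop :=
  ∀ x y z, d x (d y z) = d (d y x) z + d (d x y) z

theorem sym_comm (d : A →ₗ[K] A →ₗ[K] A) (x y : A) : sym d x y = sym d y x :=
  add_comm _ _

theorem IsZinbiel.sym_apply (hd : IsZinbiel d) (x y z : A) : d (sym d x y) z = d x (d y z) := by
  rw [hd x y z, sym, map_add, LinearMap.add_apply, add_comm]

theorem IsZinbiel.left_comm (hd : IsZinbiel d) (x y z : A) : d x (d y z) = d y (d x z) := by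
  rw [← hd.sym_apply, sym_comm, hd.sym_apply]

theorem IsZinbiel.sym_assoc (hd : IsZinbiel d) (x y z : A) :
    sym d (sym d x y) z = sym d x (sym d y z) :=
  calc sym d (sym d x y) z
    _ = d x (d y z) + (d z (d x y) + d z (d y x)) := by
      rw [sym, hd.sym_apply, sym, map_add]
    _ = d x (d y z + d z y) + d y (d z x) := by
      rw [hd.left_comm z x y, hd.left_comm z y x, map_add, add_assoc]
    _ = sym d x (sym d y z) := by
      rw [sym, hd.sym_apply, sym]

theorem cbr_rotate (t : A →ₗ[K] A →ₗ[K] A →ₗ[K] A) (x y z : A) : cbr t x y z = cbr t y z x := by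
  simp only [cbr]
  abel

theorem cbr_swap_left (ht : ∀ x y z, t x y z = -t y x z) (x y z : A) :
    cbr t x y z = -cbr t y x z := by
  simp only [cbr]
  rw [ht y x z, ht x z y, ht z y x]
  abel

theorem cbr_swap_right (ht : ∀ x y z, t x y z = -t y x z) (x y z : A) :
    cbr t x y z = -cbr t x z y := by
  rw [cbr_rotate, cbr_swap_left ht, cbr_rotate t x z y]

theorem F1_swap (ht : ∀ x y z, t x y z = -t y x z) (x₁ x₂ x₃ x₄ : A) :
    F1 d t x₁ x₂ x₃ x₄ = -F1 d t x₂ x₁ x₃ x₄ := by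
  simp only [F1, ht x₁ x₂, cbr_swap_left ht x₁ x₂, map_neg, LinearMap.neg_apply]
  abel

theorem F2_add (d : A →ₗ[K] A →ₗ[K] A) (t : A →ₗ[K] A →ₗ[K] A →ₗ[K] A) (x₁ x₂ x₃ u v : A) :
    F2 d t x₁ x₂ x₃ (u + v) = F2 d t x₁ x₂ x₃ u + F2 d t x₁ x₂ x₃ v := by
  simp only [F2, map_add]
  abel

theorem IsZinbiel.Lpre_apply (hd : IsZinbiel d) (x₁ x₂ x₃ x₄ u : A) :
    d (Lpre d t x₁ x₂ x₃ x₄) u =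
      d (cbr t x₁ x₂ (sym d x₃ x₄)) u - d x₃ (d (cbr t x₁ x₂ x₄) u)
        - d x₄ (d (cbr t x₁ x₂ x₃) u) := by
  simp only [Lpre, map_sub, LinearMap.sub_apply, hd.sym_apply, hd.left_comm _ x₄]

theorem IsZinbiel.F2_apply_sub_apply_F2 (hd : IsZinbiel d) (x₁ x₂ x₃ x₄ u : A) :
    F2 d t x₂ x₃ x₄ (d x₁ u) - d x₁ (F2 d t x₂ x₃ x₄ u) =
      d x₃ (F1 d t x₂ x₄ x₁ u) + d x₄ (F1 d t x₂ x₃ x₁ u) - F1 d t x₂ (sym d x₃ x₄) x₁ u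
        - d (Lpre d t x₁ x₂ x₃ x₄) u := by
  simp only [hd.Lpre_apply, F1, F2, map_sub, map_add, cbr_rotate t x₁ x₂,
    hd.left_comm x₁ x₃, hd.left_comm x₁ x₄]
  abel

theorem Lpre_eq_F1_add_F1_sub_F2_add_F2 (ht : ∀ x y z, t x y z = -t y x z) (x₁ x₂ x₃ x₄ : A) :
    Lpre d t x₁ x₂ x₃ x₄ =
      F1 d t x₁ x₂ x₃ x₄ + F1 d t x₁ x₂ x₄ x₃ - F2 d t x₂ x₃ x₄ x₁ + F2 d t x₁ x₃ x₄ x₂ := by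
  simp only [Lpre, F1, F2, sym, cbr, ht x₁ (d _ _), ht x₁ x₃, ht x₁ x₄, map_add, map_neg,
    LinearMap.add_apply]
  abel

end Operations

namespace ThreePreLie

variable {K : Type*} [Field K] {A : Type*} [AddCommGroup A] [Module K A] (Q : ThreePreLie K A)

theorem tri_cbr_left_add_tri_cbr_middle (x₁ x₂ x₃ x₄ x₅ : A) :
    Q.tri (cbr Q.tri x₃ x₄ x₅) x₁ x₂ + Q.tri x₂ (cbr Q.tri x₃ x₄ x₅) x₁ =
      Q.tri x₃ x₄ (Q.tri x₂ x₅ x₁ + Q.tri x₅ x₁ x₂)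
        + Q.tri x₄ x₅ (Q.tri x₂ x₃ x₁ + Q.tri x₃ x₁ x₂)
        + Q.tri x₅ x₃ (Q.tri x₂ x₄ x₁ + Q.tri x₄ x₁ x₂) := by
  rw [Q.tri_skew x₂ (cbr _ _ _ _), Q.preLie₂, Q.preLie₂, Q.tri_skew x₂ x₃, Q.tri_skew x₂ x₄,
    Q.tri_skew x₂ x₅]
  simp only [map_add, map_neg]
  abel

theorem tri_cbr_right (x₁ x₂ x₃ x₄ x₅ : A) :
    Q.tri x₁ x₂ (cbr Q.tri x₃ x₄ x₅) =
      (Q.tri (cbr Q.tri x₁ x₂ x₃) x₄ x₅ + Q.tri x₄ x₅ (Q.tri x₁ x₂ x₃)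
          + Q.tri x₅ (cbr Q.tri x₁ x₂ x₃) x₄)
        + (Q.tri x₃ (cbr Q.tri x₁ x₂ x₄) x₅ + Q.tri (cbr Q.tri x₁ x₂ x₄) x₅ x₃
          + Q.tri x₅ x₃ (Q.tri x₁ x₂ x₄))
        + (Q.tri x₃ x₄ (Q.tri x₁ x₂ x₅) + Q.tri x₄ (cbr Q.tri x₁ x₂ x₅) x₃
          + Q.tri (cbr Q.tri x₁ x₂ x₅) x₃ x₄) := by
  rw [cbr.eq_1 _ x₃, map_add, map_add, Q.preLie₁ x₁ x₂ x₃, Q.preLie₁ x₁ x₂ x₄,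
    Q.preLie₁ x₁ x₂ x₅]
  abel

theorem cbr_fundamental (x₁ x₂ x₃ x₄ x₅ : A) :
    cbr Q.tri x₁ x₂ (cbr Q.tri x₃ x₄ x₅) =
      cbr Q.tri (cbr Q.tri x₁ x₂ x₃) x₄ x₅ + cbr Q.tri x₃ (cbr Q.tri x₁ x₂ x₄) x₅
        + cbr Q.tri x₃ x₄ (cbr Q.tri x₁ x₂ x₅) := by
  have tri_cbr (a b y : A) : Q.tri a b (cbr Q.tri x₁ x₂ y) =
      Q.tri a b (Q.tri x₁ x₂ y) + Q.tri a b (Q.tri x₂ y x₁ + Q.tri y x₁ x₂) := by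
    rw [cbr, add_assoc, map_add]
  rw [cbr.eq_1 _ x₁ x₂ (cbr _ _ _ _), add_assoc, add_comm (Q.tri x₂ _ _),
    Q.tri_cbr_left_add_tri_cbr_middle, Q.tri_cbr_right, cbr.eq_1 _ (cbr _ _ _ _) x₄ x₅,
    cbr.eq_1 _ x₃ (cbr _ _ _ _) x₅, cbr.eq_1 _ x₃ x₄ (cbr _ _ _ _), tri_cbr, tri_cbr, tri_cbr]
  abel

theorem tri_comp_sub_tri_comp (x₁ x₂ x₃ x₄ : A) :
    Q.tri x₁ x₂ ∘ₗ Q.tri x₃ x₄ - Q.tri x₃ x₄ ∘ₗ Q.tri x₁ x₂ =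
      Q.tri (cbr Q.tri x₁ x₂ x₃) x₄ - Q.tri (cbr Q.tri x₁ x₂ x₄) x₃ := by
  ext z
  simp only [LinearMap.sub_apply, LinearMap.comp_apply]
  rw [Q.preLie₁ x₁ x₂ x₃ x₄ z, Q.tri_skew x₃ (cbr _ _ _ _)]
  abel

end ThreePreLie

namespace TernaryPreFM

variable {K : Type*} [Field K] {A : Type*} [AddCommGroup A] [Module K A] (P : TernaryPreFM K A)

/-- The 3-pre-Lie algebra underlying a ternary pre-F-manifold algebra. -/
def toThreePreLie : ThreePreLie K A where
  tri := P.tri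
  tri_skew := P.tri_skew
  preLie₁ := P.preLie₁
  preLie₂ := P.preLie₂

theorem isZinbiel : IsZinbiel P.dia := P.zinbiel

theorem F1_sym_middle (x₁ x₂ x₃ x₄ x₅ : A) :
    F1 P.dia P.tri x₁ (sym P.dia x₂ x₃) x₄ x₅ =
      P.dia x₂ (F1 P.dia P.tri x₁ x₃ x₄ x₅) + P.dia x₃ (F1 P.dia P.tri x₁ x₂ x₄ x₅) := by
  rw [F1_swap P.tri_skew, P.pf1, F1_swap P.tri_skew x₁ x₃, F1_swap P.tri_skew x₁ x₂,
    map_neg, map_neg, neg_add]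

theorem dia_Lpre_eq_neg_self (x₁ x₂ x₃ x₄ u : A) :
    P.dia (Lpre P.dia P.tri x₁ x₂ x₃ x₄) u = -P.dia (Lpre P.dia P.tri x₁ x₂ x₃ x₄) u :=
  calc P.dia (Lpre P.dia P.tri x₁ x₂ x₃ x₄) u
    _ = F2 P.dia P.tri x₂ x₃ x₄ (P.dia x₁ u) - P.dia x₁ (F2 P.dia P.tri x₂ x₃ x₄ u) :=
      P.pf3 x₁ x₂ x₃ x₄ u
    _ = -P.dia (Lpre P.dia P.tri x₁ x₂ x₃ x₄) u := by
      rw [P.isZinbiel.F2_apply_sub_apply_F2, F1_sym_middle, sub_self, zero_sub]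

theorem F2_dia (x₁ x₂ x₃ x₄ u : A) :
    F2 P.dia P.tri x₂ x₃ x₄ (P.dia x₁ u) =
      P.dia x₁ (F2 P.dia P.tri x₂ x₃ x₄ u) - P.dia (Lpre P.dia P.tri x₁ x₂ x₃ x₄) u := by
  rw [sub_eq_add_neg, ← P.dia_Lpre_eq_neg_self, P.pf3, add_sub_cancel]

theorem Lpre_sym_left (x₁ x₂ x₃ x₄ x₅ : A) :
    Lpre P.dia P.tri (sym P.dia x₁ x₂) x₃ x₄ x₅ =
      sym P.dia x₁ (Lpre P.dia P.tri x₂ x₃ x₄ x₅)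
        + sym P.dia x₂ (Lpre P.dia P.tri x₁ x₃ x₄ x₅) := by
  have F2_sym : F2 P.dia P.tri x₃ x₄ x₅ (sym P.dia x₁ x₂) =
      P.dia x₁ (F2 P.dia P.tri x₃ x₄ x₅ x₂) - P.dia (Lpre P.dia P.tri x₁ x₃ x₄ x₅) x₂
        + (P.dia x₂ (F2 P.dia P.tri x₃ x₄ x₅ x₁) - P.dia (Lpre P.dia P.tri x₂ x₃ x₄ x₅) x₁) := by
    rw [sym, F2_add, F2_dia, F2_dia]
  have dia_Lpre (y z : A) : P.dia y (Lpre P.dia P.tri z x₃ x₄ x₅) =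
      P.dia y (F1 P.dia P.tri z x₃ x₄ x₅) + P.dia y (F1 P.dia P.tri z x₃ x₅ x₄)
        - P.dia y (F2 P.dia P.tri x₃ x₄ x₅ z) + P.dia y (F2 P.dia P.tri z x₄ x₅ x₃) := by
    rw [Lpre_eq_F1_add_F1_sub_F2_add_F2 P.tri_skew, map_add, map_sub, map_add]
  rw [Lpre_eq_F1_add_F1_sub_F2_add_F2 P.tri_skew, P.pf1, P.pf1, P.pf2, F2_sym,
    sym.eq_1 _ x₁, sym.eq_1 _ x₂, dia_Lpre, dia_Lpre]
  abel

/-- The sub-adjacent ternary F-manifold algebra `A^c`, with product `x·y = x⋄y + y⋄x` and bracket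
the cyclic sum of `{·,·,·}`. -/
def subAdjacent : TernaryFM K A where
  mul := symBilin P.dia
  br := cbrTrilin P.tri
  mul_comm := sym_comm P.dia
  mul_assoc := P.isZinbiel.sym_assoc
  br_skew₁₂ := cbr_swap_left P.tri_skew
  br_skew₂₃ := cbr_swap_right P.tri_skew
  fund := P.toThreePreLie.cbr_fundamental
  leib := P.Lpre_sym_left

theorem is3LieRep_tri : Is3LieRep P.subAdjacent P.tri :=
  ⟨fun x y ↦ LinearMap.ext (P.tri_skew x y), P.toThreePreLie.tri_comp_sub_tri_comp,
    fun x₁ x₂ x₃ x₄ ↦ LinearMap.ext (P.preLie₂ x₁ x₂ x₃ x₄)⟩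

theorem isAssocRep_dia : IsAssocRep P.subAdjacent P.dia :=
  fun x y ↦ LinearMap.ext (P.isZinbiel.sym_apply x y)

theorem isFMRep_subAdjacent : IsFMRep P.subAdjacent P.tri P.dia :=
  ⟨P.is3LieRep_tri, P.isAssocRep_dia, P.pf1, P.pf2, P.pf3⟩

end TernaryPreFM

theorem stmt10_general {K : Type*} [Field K]
    {A : Type*} [AddCommGroup A] [Module K A] (P : TernaryPreFM K A) :
    ∃ T : TernaryFM K A,
      (∀ x y, T.mul x y = sym P.dia x y) ∧
      (∀ x y z, T.br x y z = cbr P.tri x y z) ∧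
      IsFMRep T P.tri P.dia :=
  ⟨P.subAdjacent, fun _ _ ↦ rfl, fun _ _ _ ↦ rfl, P.isFMRep_subAdjacent⟩

/-- `(A; 𝕃, L_⋄)` is a representation of the sub-adjacent
ternary F-manifold algebra `A^c` of a ternary pre-F-manifold algebra. -/
theorem stmt10 {K : Type*} [Field K] [CharZero K]
    {A : Type*} [AddCommGroup A] [Module K A] (P : TernaryPreFM K A) :
    ∃ T : TernaryFM K A,
      (∀ x y, T.mul x y = sym P.dia x y) ∧
      (∀ x y z, T.br x y z = cbr P.tri x y z) ∧
      IsFMRep T P.tri P.dia :=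
  stmt10_general P
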